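/- arXiv:1801.06488 — 7 statements merged into one kernel-verified Lean document; each statement's English description precedes it below -/
import Mathlib

section
/- Let C be a category and let (P, p_A, p_B, i_A, i_B) be a biproduct of objects A and B in the enrichment-free sense. Then the composite p_B ∘ i_A : A → B is a zero morphism, i.e. it is both constant and coconstant; dually, p_A ∘ i_B : B → A is also a zero morphism. -/
open CategoryTheory

universe v u

/-- A morphism `a : A ⟶ B` is constant if precomposition with anything gives the same result. -/
def IsConstantMor {C : Type u} [Category.{v} C] {A B : C} (a : A ⟶ B) : Prop :=
  ∀ ⦃X : C⦄ (f g : X ⟶ A), f ≫ a = g ≫ a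

/-- A morphism `a : A ⟶ B` is coconstant if postcomposition with anything gives the same result. -/
def IsCoconstantMor {C : Type u} [Category.{v} C] {A B : C} (a : A ⟶ B) : Prop :=
  ∀ ⦃Y : C⦄ (u v : B ⟶ Y), a ≫ u = a ≫ v

/-- `(P, pA, pB, iA, iB)` is a biproduct of `A` and `B` in the enrichment-free sense:
`(P, pA, pB)` is a product, `(P, iA, iB)` is a coproduct, `pA ∘ iA = id`, `pB ∘ iB = id`,
and the two canonical idempotents `iA ∘ pA` and `iB ∘ pB` on `P` commute. -/
structure IsEFBiproduct {C : Type u} [Category.{v} C] {A B : C} (P : C)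
    (pA : P ⟶ A) (pB : P ⟶ B) (iA : A ⟶ P) (iB : B ⟶ P) : Prop where
  isProduct : ∀ (X : C) (f : X ⟶ A) (g : X ⟶ B), ∃! h : X ⟶ P, h ≫ pA = f ∧ h ≫ pB = g
  isCoproduct : ∀ (X : C) (f : A ⟶ X) (g : B ⟶ X), ∃! h : P ⟶ X, iA ≫ h = f ∧ iB ≫ h = g
  pA_iA : iA ≫ pA = 𝟙 A
  pB_iB : iB ≫ pB = 𝟙 B
  idem_comm : (pB ≫ iB) ≫ (pA ≫ iA) = (pA ≫ iA) ≫ (pB ≫ iB)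

/-- The category `C` has zero morphisms: a family `z A B : A ⟶ B` absorbing under
pre- and postcomposition, i.e. `g ∘ z X Y ∘ f = z W Z`. -/
def HasZeroFamily (C : Type u) [Category.{v} C] : Prop :=
  ∃ z : ∀ A B : C, A ⟶ B, ∀ (W X Y Z : C) (f : W ⟶ X) (g : Y ⟶ Z), f ≫ z X Y ≫ g = z W Z

/-! Write `z = pB ∘ iA`. Since `pB` absorbs the idempotent `iB ∘ pB`, commuting it past `iA ∘ pA`
gives `z ∘ pA = b ∘ pB` with `b = z ∘ pA ∘ iB`. The components of a morphism into `P` can be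
prescribed independently, so `z ∘ x = b ∘ y` for all `x : X ⟶ A` and `y : X ⟶ B`, and hence
`z ∘ x` does not depend on `x`; a suitable `y` exists, for example `z ∘ x` itself. The other claims
follow by exchanging `A` and `B` and by passing to the opposite category. -/

section

variable {C : Type u} [Category.{v} C] {A B P Z : C}
  {pA : P ⟶ A} {pB : P ⟶ B} {iA : A ⟶ P} {iB : B ⟶ P}

/-- `(P, pA, pB)` is a weak product of `A` and `B`: pairs of morphisms to `A` and `B` lift to `P`,
not necessarily uniquely. This is the propositional, componentwise form of
`Limits.IsWeakLimit (Limits.BinaryFan.mk pA pB)`, parallel to `IsEFBiproduct.isProduct`. -/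
def IsWeakProduct (pA : P ⟶ A) (pB : P ⟶ B) : Prop :=
  ∀ ⦃X : C⦄ (f : X ⟶ A) (g : X ⟶ B), ∃ h : X ⟶ P, h ≫ pA = f ∧ h ≫ pB = g

/-- `(P, iA, iB)` is a weak coproduct of `A` and `B`: pairs of morphisms out of `A` and `B` extend
to `P`, not necessarily uniquely. It is the notion dual to `IsWeakProduct`. -/
def IsWeakCoproduct (iA : A ⟶ P) (iB : B ⟶ P) : Prop :=
  ∀ ⦃X : C⦄ (f : A ⟶ X) (g : B ⟶ X), ∃ h : P ⟶ X, iA ≫ h = f ∧ iB ≫ h = g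

theorem IsConstantMor.unop {a : A ⟶ B} (h : IsConstantMor a.op) : IsCoconstantMor a :=
  fun _ f g => Quiver.Hom.op_inj (h f.op g.op)

theorem IsWeakProduct.swap (h : IsWeakProduct pA pB) : IsWeakProduct pB pA :=
  fun _ f g => (h g f).imp fun _ => And.symm

theorem IsWeakCoproduct.swap (h : IsWeakCoproduct iA iB) : IsWeakCoproduct iB iA :=
  fun _ f g => (h g f).imp fun _ => And.symm

theorem IsWeakCoproduct.op (h : IsWeakCoproduct iA iB) : IsWeakProduct iA.op iB.op := by
  intro X f g
  obtain ⟨m, hA, hB⟩ := h f.unop g.unop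
  exact ⟨m.op, Quiver.Hom.unop_inj hA, Quiver.Hom.unop_inj hB⟩

theorem IsWeakProduct.comp_eq_comp (h : IsWeakProduct pA pB) {a : A ⟶ Z} {b : B ⟶ Z}
    (hab : pA ≫ a = pB ≫ b) {X : C} (x : X ⟶ A) (y : X ⟶ B) : x ≫ a = y ≫ b := by
  obtain ⟨m, rfl, rfl⟩ := h x y
  simp only [Category.assoc, hab]

theorem IsWeakProduct.isConstantMor_of_comp_eq_comp (h : IsWeakProduct pA pB) {a : A ⟶ Z}
    {b : B ⟶ Z} (hab : pA ≫ a = pB ≫ b) (t : A ⟶ B) : IsConstantMor a := fun _ f g =>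
  calc
    f ≫ a = (f ≫ t) ≫ b := h.comp_eq_comp hab f (f ≫ t)
    _ = g ≫ a := (h.comp_eq_comp hab g (f ≫ t)).symm

theorem IsWeakProduct.isConstantMor_comp (h : IsWeakProduct pA pB) (hB : iB ≫ pB = 𝟙 B)
    (comm : (pB ≫ iB) ≫ (pA ≫ iA) = (pA ≫ iA) ≫ (pB ≫ iB)) : IsConstantMor (iA ≫ pB) := by
  have factors : pA ≫ iA ≫ pB = pB ≫ iB ≫ pA ≫ iA ≫ pB :=
    calc
      pA ≫ iA ≫ pB = ((pA ≫ iA) ≫ (pB ≫ iB)) ≫ pB := by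
        simp only [Category.assoc, hB, Category.comp_id]
      _ = ((pB ≫ iB) ≫ (pA ≫ iA)) ≫ pB := by rw [comm]
      _ = pB ≫ iB ≫ pA ≫ iA ≫ pB := by simp only [Category.assoc]
  exact h.isConstantMor_of_comp_eq_comp factors (iA ≫ pB)

theorem IsWeakCoproduct.isCoconstantMor_comp (h : IsWeakCoproduct iA iB) (hA : iA ≫ pA = 𝟙 A)
    (comm : (pB ≫ iB) ≫ (pA ≫ iA) = (pA ≫ iA) ≫ (pB ≫ iB)) : IsCoconstantMor (iA ≫ pB) := by
  have comm_op : (iA.op ≫ pA.op) ≫ (iB.op ≫ pB.op) = (iB.op ≫ pB.op) ≫ (iA.op ≫ pA.op) :=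
    congrArg Quiver.Hom.op comm
  exact (h.op.swap.isConstantMor_comp (congrArg Quiver.Hom.op hA) comm_op).unop

theorem IsEFBiproduct.isWeakProduct (h : IsEFBiproduct P pA pB iA iB) : IsWeakProduct pA pB :=
  fun X f g => (h.isProduct X f g).exists

theorem IsEFBiproduct.isWeakCoproduct (h : IsEFBiproduct P pA pB iA iB) : IsWeakCoproduct iA iB :=
  fun X f g => (h.isCoproduct X f g).exists

theorem stmt0_general (hP : IsWeakProduct pA pB) (hI : IsWeakCoproduct iA iB)
    (hA : iA ≫ pA = 𝟙 A) (hB : iB ≫ pB = 𝟙 B)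
    (comm : (pB ≫ iB) ≫ (pA ≫ iA) = (pA ≫ iA) ≫ (pB ≫ iB)) :
    (IsConstantMor (iA ≫ pB) ∧ IsCoconstantMor (iA ≫ pB)) ∧
    (IsConstantMor (iB ≫ pA) ∧ IsCoconstantMor (iB ≫ pA)) :=
  ⟨⟨hP.isConstantMor_comp hB comm, hI.isCoconstantMor_comp hA comm⟩,
    ⟨hP.swap.isConstantMor_comp hA comm.symm, hI.swap.isCoconstantMor_comp hB comm.symm⟩⟩

end

/-- In a biproduct in the enrichment-free sense, `pB ∘ iA : A ⟶ B` is a zero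
morphism (both constant and coconstant), and dually so is `pA ∘ iB : B ⟶ A`. -/
theorem stmt0 {C : Type u} [Category.{v} C] {A B P : C}
    (pA : P ⟶ A) (pB : P ⟶ B) (iA : A ⟶ P) (iB : B ⟶ P)
    (h : IsEFBiproduct P pA pB iA iB) :
    (IsConstantMor (iA ≫ pB) ∧ IsCoconstantMor (iA ≫ pB)) ∧
    (IsConstantMor (iB ≫ pA) ∧ IsCoconstantMor (iB ≫ pA)) := by
  exact stmt0_general h.isWeakProduct h.isWeakCoproduct h.pA_iA h.pB_iB h.idem_comm
end

section
/- Let C be a category in which every pair of objects admits a binary biproduct in the enrichment-free sense. Then C has zero morphisms: there is a family of morphisms 0_{A,B} : A → B, one for each pair of objects A, B, such that for every f : A → B and g : C → D one has g ∘ 0_{B,C} ∘ f = 0_{A,D}. -/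
open CategoryTheory

universe v u

/-!
Write `c = iB ≫ pA : B ⟶ A`. Composing the commutation of the two idempotents with `pA` gives
`pB ≫ c = pA ≫ iA ≫ pB ≫ c`, and since the components of a morphism into `P` can be prescribed
independently, `g ≫ c = f ≫ iA ≫ pB ≫ c` for all `f : X ⟶ A` and `g : X ⟶ B`. For a fixed `f`
(such as `g₀ ≫ c` for any `g₀ : X ⟶ B`) the right-hand side does not involve `g`, so `c` is
constant; dually `c` is coconstant. Finally, a constant morphism `a : A ⟶ B` equals any coconstant
`b : A ⟶ B` as soon as there is a morphism `w : B ⟶ A`, because `a = b ≫ w ≫ a = b`.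
-/

section

variable {C : Type u} [Category.{v} C]

namespace IsConstantMor

variable {A B : C} {a : A ⟶ B}

lemma precomp (ha : IsConstantMor a) {X : C} (f : X ⟶ A) : IsConstantMor (f ≫ a) :=
  fun _ p q => by simpa only [Category.assoc] using ha (p ≫ f) (q ≫ f)

lemma postcomp (ha : IsConstantMor a) {Y : C} (g : B ⟶ Y) : IsConstantMor (a ≫ g) :=
  fun _ p q => by simp only [← Category.assoc, ha p q]

lemma eq_of_isCoconstantMor {b : A ⟶ B} (ha : IsConstantMor a) (hb : IsCoconstantMor b)
    (w : B ⟶ A) : a = b :=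
  calc
    a = 𝟙 A ≫ a := (Category.id_comp a).symm
    _ = (b ≫ w) ≫ a := ha _ _
    _ = b ≫ w ≫ a := Category.assoc b w a
    _ = b ≫ 𝟙 B := hb _ _
    _ = b := Category.comp_id b

end IsConstantMor

lemma hasZeroFamily_of_exists_isConstantMor_and_isCoconstantMor
    (h : ∀ A B : C, ∃ z : A ⟶ B, IsConstantMor z ∧ IsCoconstantMor z) : HasZeroFamily C := by
  choose z hconst hcoconst using h
  exact ⟨z, fun W X Y Z f g =>
    (((hconst X Y).postcomp g).precomp f).eq_of_isCoconstantMor (hcoconst W Z) (z Z W)⟩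

/-- A weak biproduct in the enrichment-free sense: as in `IsEFBiproduct`, but `P` is only a weak
product and a weak coproduct, so induced morphisms exist without having to be unique. -/
structure IsWeakEFBiproduct {A B : C} (P : C) (pA : P ⟶ A) (pB : P ⟶ B) (iA : A ⟶ P)
    (iB : B ⟶ P) : Prop where
  exists_lift : ∀ {X : C} (f : X ⟶ A) (g : X ⟶ B), ∃ t : X ⟶ P, t ≫ pA = f ∧ t ≫ pB = g
  exists_desc : ∀ {Y : C} (f : A ⟶ Y) (g : B ⟶ Y), ∃ t : P ⟶ Y, iA ≫ t = f ∧ iB ≫ t = g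
  pA_iA : iA ≫ pA = 𝟙 A
  pB_iB : iB ≫ pB = 𝟙 B
  idem_comm : (pB ≫ iB) ≫ (pA ≫ iA) = (pA ≫ iA) ≫ (pB ≫ iB)

variable {A B P : C} {pA : P ⟶ A} {pB : P ⟶ B} {iA : A ⟶ P} {iB : B ⟶ P}

lemma IsEFBiproduct.isWeakEFBiproduct (H : IsEFBiproduct P pA pB iA iB) :
    IsWeakEFBiproduct P pA pB iA iB where
  exists_lift f g := (H.isProduct _ f g).exists
  exists_desc f g := (H.isCoproduct _ f g).exists
  pA_iA := H.pA_iA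
  pB_iB := H.pB_iB
  idem_comm := H.idem_comm

namespace IsWeakEFBiproduct

lemma comp_iB_pA (H : IsWeakEFBiproduct P pA pB iA iB) {X : C} (f : X ⟶ A) (g : X ⟶ B) :
    g ≫ iB ≫ pA = f ≫ iA ≫ pB ≫ iB ≫ pA := by
  obtain ⟨t, rfl, rfl⟩ := H.exists_lift f g
  calc
    (t ≫ pB) ≫ iB ≫ pA = t ≫ ((pB ≫ iB) ≫ (pA ≫ iA)) ≫ pA := by
      simp only [Category.assoc, H.pA_iA, Category.comp_id]
    _ = t ≫ ((pA ≫ iA) ≫ (pB ≫ iB)) ≫ pA := by rw [H.idem_comm]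
    _ = (t ≫ pA) ≫ iA ≫ pB ≫ iB ≫ pA := by simp only [Category.assoc]

lemma iB_pA_comp (H : IsWeakEFBiproduct P pA pB iA iB) {Y : C} (f : A ⟶ Y) (g : B ⟶ Y) :
    (iB ≫ pA) ≫ f = (iB ≫ pA) ≫ iA ≫ pB ≫ g := by
  obtain ⟨t, rfl, rfl⟩ := H.exists_desc f g
  calc
    (iB ≫ pA) ≫ iA ≫ t = (iB ≫ pB) ≫ iB ≫ pA ≫ iA ≫ t := by
      simp only [H.pB_iB, Category.assoc, Category.id_comp]
    _ = iB ≫ ((pB ≫ iB) ≫ (pA ≫ iA)) ≫ t := by simp only [Category.assoc]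
    _ = iB ≫ ((pA ≫ iA) ≫ (pB ≫ iB)) ≫ t := by rw [H.idem_comm]
    _ = (iB ≫ pA) ≫ iA ≫ pB ≫ iB ≫ t := by simp only [Category.assoc]

lemma isConstantMor_iB_pA (H : IsWeakEFBiproduct P pA pB iA iB) : IsConstantMor (iB ≫ pA) :=
  fun _ f g => (H.comp_iB_pA (f ≫ iB ≫ pA) f).trans (H.comp_iB_pA (f ≫ iB ≫ pA) g).symm

lemma isCoconstantMor_iB_pA (H : IsWeakEFBiproduct P pA pB iA iB) :
    IsCoconstantMor (iB ≫ pA) :=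
  fun _ f g => (H.iB_pA_comp f ((iB ≫ pA) ≫ f)).trans (H.iB_pA_comp g ((iB ≫ pA) ≫ f)).symm

end IsWeakEFBiproduct

end

theorem stmt1_general {C : Type u} [Category.{v} C]
    (h : ∀ A B : C, ∃ (P : C) (pA : P ⟶ A) (pB : P ⟶ B) (iA : A ⟶ P) (iB : B ⟶ P),
      IsWeakEFBiproduct P pA pB iA iB) :
    HasZeroFamily C := by
  refine hasZeroFamily_of_exists_isConstantMor_and_isCoconstantMor fun A B => ?_
  obtain ⟨P, pB, pA, iB, iA, H⟩ := h B A
  exact ⟨iA ≫ pB, H.isConstantMor_iB_pA, H.isCoconstantMor_iB_pA⟩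

/-- If every pair of objects of `C` admits a binary biproduct in the
enrichment-free sense, then `C` has zero morphisms. -/
theorem stmt1 {C : Type u} [Category.{v} C]
    (h : ∀ A B : C, ∃ (P : C) (pA : P ⟶ A) (pB : P ⟶ B) (iA : A ⟶ P) (iB : B ⟶ P),
      IsEFBiproduct P pA pB iA iB) :
    HasZeroFamily C := by
  refine stmt1_general fun A B => ?_
  obtain ⟨P, pA, pB, iA, iB, H⟩ := h A B
  exact ⟨P, pA, pB, iA, iB, H.isWeakEFBiproduct⟩
end

section
/- Let C be a category with zero morphisms, and let (P, p_A : P → A, p_B : P → B, i_A : A → P, i_B : B → P) be such that (P, p_A, p_B) is a product of A and B, (P, i_A, i_B) is a coproduct of A and B, p_A ∘ i_A = id_A and p_B ∘ i_B = id_B. Then the equation (i_A ∘ p_A) ∘ (i_B ∘ p_B) = (i_B ∘ p_B) ∘ (i_A ∘ p_A) holds if and only if p_B ∘ i_A = 0_{A,B} and p_A ∘ i_B = 0_{B,A}. In other words, in a category with zero morphisms the enrichment-free definition of biproduct agrees with the usual one. -/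
open CategoryTheory

universe v u

section

open Limits

/-- The Mathlib structure of zero morphisms carried by a family `z` as in `HasZeroFamily`; its zero
`X ⟶ Y` is `z X Y` by definition. -/
abbrev zeroMorphismsOfFamily {C : Type u} [Category.{v} C] (z : ∀ X Y : C, X ⟶ Y)
    (hz : ∀ (W X Y Z : C) (f : W ⟶ X) (g : Y ⟶ Z), f ≫ z X Y ≫ g = z W Z) :
    HasZeroMorphisms C where
  zero X Y := ⟨z X Y⟩
  comp_zero {X Y} f Z := by
    change f ≫ z Y Z = z X Z
    simpa only [Category.comp_id] using hz X Y Z Z f (𝟙 Z)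
  zero_comp X {Y Z} g := by
    change z X Y ≫ g = z X Z
    simpa only [Category.id_comp] using hz X X Y Z (𝟙 X) g

variable {C : Type u} [Category.{v} C] [HasZeroMorphisms C] {A B P : C}
  {pA : P ⟶ A} {pB : P ⟶ B} {iA : A ⟶ P} {iB : B ⟶ P}

-- `s` plays the role of `⟨𝟙, 0⟩ : A ⟶ A × B`; commutation forces `iA` to have the same second
-- component.
theorem comp_eq_zero_of_idem_comm {s : A ⟶ P} (hsA : s ≫ pA = 𝟙 A) (hsB : s ≫ pB = 0)
    (hB : iB ≫ pB = 𝟙 B) (hcomm : (pB ≫ iB) ≫ (pA ≫ iA) = (pA ≫ iA) ≫ (pB ≫ iB)) :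
    iA ≫ pB = 0 :=
  calc
    iA ≫ pB = (s ≫ pA) ≫ iA ≫ pB ≫ iB ≫ pB := by rw [hsA, hB, Category.id_comp, Category.comp_id]
    _ = s ≫ ((pA ≫ iA) ≫ (pB ≫ iB)) ≫ pB := by simp only [Category.assoc]
    _ = s ≫ ((pB ≫ iB) ≫ (pA ≫ iA)) ≫ pB := by rw [hcomm]
    _ = (s ≫ pB) ≫ iB ≫ pA ≫ iA ≫ pB := by simp only [Category.assoc]
    _ = 0 := by rw [hsB, zero_comp]

theorem idem_comp_eq_zero (h : iA ≫ pB = 0) : (pA ≫ iA) ≫ (pB ≫ iB) = 0 := by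
  rw [Category.assoc, reassoc_of% h, zero_comp, comp_zero]

theorem stmt4_general
    (hprod : ∀ (X : C) (f : X ⟶ A) (g : X ⟶ B), ∃ h : X ⟶ P, h ≫ pA = f ∧ h ≫ pB = g)
    (hA : iA ≫ pA = 𝟙 A) (hB : iB ≫ pB = 𝟙 B) :
    (pB ≫ iB) ≫ (pA ≫ iA) = (pA ≫ iA) ≫ (pB ≫ iB) ↔ iA ≫ pB = 0 ∧ iB ≫ pA = 0 := by
  constructor
  · intro hcomm
    obtain ⟨s, hsA, hsB⟩ := hprod A (𝟙 A) 0
    obtain ⟨t, htA, htB⟩ := hprod B 0 (𝟙 B)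
    exact ⟨comp_eq_zero_of_idem_comm hsA hsB hB hcomm,
      comp_eq_zero_of_idem_comm htB htA hA hcomm.symm⟩
  · rintro ⟨hAB, hBA⟩
    rw [idem_comp_eq_zero hAB, idem_comp_eq_zero hBA]

end

/-- In a category with zero morphisms, given product/coproduct data with
`pA ∘ iA = id`, `pB ∘ iB = id`, the commutation equation of the two canonical idempotents
holds iff `pB ∘ iA` and `pA ∘ iB` are the zero morphisms. -/
theorem stmt4 {C : Type u} [Category.{v} C]
    (z : ∀ X Y : C, X ⟶ Y)
    (hz : ∀ (W X Y Z : C) (f : W ⟶ X) (g : Y ⟶ Z), f ≫ z X Y ≫ g = z W Z)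
    {A B P : C} (pA : P ⟶ A) (pB : P ⟶ B) (iA : A ⟶ P) (iB : B ⟶ P)
    (hprod : ∀ (X : C) (f : X ⟶ A) (g : X ⟶ B), ∃! h : X ⟶ P, h ≫ pA = f ∧ h ≫ pB = g)
    (hcoprod : ∀ (X : C) (f : A ⟶ X) (g : B ⟶ X), ∃! h : P ⟶ X, iA ≫ h = f ∧ iB ≫ h = g)
    (h1 : iA ≫ pA = 𝟙 A) (h2 : iB ≫ pB = 𝟙 B) :
    ((pB ≫ iB) ≫ (pA ≫ iA) = (pA ≫ iA) ≫ (pB ≫ iB)) ↔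
      (iA ≫ pB = z A B ∧ iB ≫ pA = z B A) := by
  let _ := zeroMorphismsOfFamily z hz
  exact stmt4_general (fun X f g => (hprod X f g).exists) h1 h2
end

section
/- Let (P, p_A, p_B, i_A, i_B) and (Q, q_A, q_B, j_A, j_B) be two biproducts of A and B in the enrichment-free sense in a category C. Then there exists a unique isomorphism f : P → Q compatible with the biproduct structures, i.e. satisfying q_A ∘ f = p_A, q_B ∘ f = p_B, f ∘ i_A = j_A and f ∘ i_B = j_B. In particular, the unique isomorphism P → Q compatible with the product structures coincides with the unique isomorphism P → Q compatible with the coproduct structures. -/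
open CategoryTheory

universe v u

/-!
The diagonal matrix entries `p_A ∘ i_A` and `p_B ∘ i_B` of a biproduct are identities. Evaluating
the commuting idempotents on an arbitrary pair of morphisms into the product shows that the
off-diagonal entry `p_B ∘ i_A` is constant; dually it is coconstant. A constant morphism `A ⟶ B`
equals every coconstant one as soon as some morphism `B ⟶ A` exists, so any two biproducts of `A`
and `B` have the same matrix entries. But a morphism from a coproduct to a product with the same
matrix respects the projections if and only if it respects the injections.
-/

section

open Limits

variable {C : Type u} [Category.{v} C] {A B P Q : C}

theorem IsConstantMor.eq_of_isCoconstantMor_s5 {a b : A ⟶ B} (ha : IsConstantMor a)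
    (hb : IsCoconstantMor b) (c : B ⟶ A) : a = b :=
  calc
    a = 𝟙 A ≫ a := (Category.id_comp a).symm
    _ = (b ≫ c) ≫ a := ha _ _
    _ = b ≫ c ≫ a := Category.assoc b c a
    _ = b ≫ 𝟙 B := hb _ _
    _ = b := Category.comp_id b

theorem isConstantMor_of_idem_comm {pA : P ⟶ A} {pB : P ⟶ B} {iA : A ⟶ P} {iB : B ⟶ P}
    (hP : IsLimit (BinaryFan.mk pA pB)) (hB : iB ≫ pB = 𝟙 B)
    (comm : (pB ≫ iB) ≫ pA ≫ iA = (pA ≫ iA) ≫ pB ≫ iB) : IsConstantMor (iA ≫ pB) := by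
  have comp_entry_eq {X : C} (f : X ⟶ A) (b : X ⟶ B) :
      f ≫ iA ≫ pB = b ≫ iB ≫ pA ≫ iA ≫ pB := by
    obtain ⟨(k : X ⟶ P), rfl : k ≫ pA = f, rfl : k ≫ pB = b⟩ := BinaryFan.IsLimit.lift' hP f b
    calc
      (k ≫ pA) ≫ iA ≫ pB = k ≫ ((pA ≫ iA) ≫ pB ≫ iB) ≫ pB := by simp [hB]
      _ = k ≫ ((pB ≫ iB) ≫ pA ≫ iA) ≫ pB := by rw [comm]
      _ = (k ≫ pB) ≫ iB ≫ pA ≫ iA ≫ pB := by simp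
  intro X f g
  exact (comp_entry_eq f (f ≫ iA ≫ pB)).trans (comp_entry_eq g (f ≫ iA ≫ pB)).symm

theorem isCoconstantMor_of_idem_comm {pA : P ⟶ A} {pB : P ⟶ B} {iA : A ⟶ P} {iB : B ⟶ P}
    (hP : IsColimit (BinaryCofan.mk iA iB)) (hA : iA ≫ pA = 𝟙 A)
    (comm : (pB ≫ iB) ≫ pA ≫ iA = (pA ≫ iA) ≫ pB ≫ iB) : IsCoconstantMor (iA ≫ pB) := by
  have comp_entry_eq {Y : C} (a : A ⟶ Y) (u : B ⟶ Y) :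
      (iA ≫ pB) ≫ u = iA ≫ pB ≫ iB ≫ pA ≫ a := by
    obtain ⟨(k : P ⟶ Y), rfl : iA ≫ k = a, rfl : iB ≫ k = u⟩ := BinaryCofan.IsColimit.desc' hP a u
    calc
      (iA ≫ pB) ≫ iB ≫ k = iA ≫ ((pA ≫ iA) ≫ pB ≫ iB) ≫ k := by simp [reassoc_of% hA]
      _ = iA ≫ ((pB ≫ iB) ≫ pA ≫ iA) ≫ k := by rw [comm]
      _ = iA ≫ pB ≫ iB ≫ pA ≫ iA ≫ k := by simp
  intro Y u w
  exact (comp_entry_eq (iA ≫ pB ≫ u) u).trans (comp_entry_eq (iA ≫ pB ≫ u) w).symm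

theorem comp_proj_iff_inj_comp_of_matrix_eq {pA : P ⟶ A} {pB : P ⟶ B} {iA : A ⟶ P} {iB : B ⟶ P}
    {qA : Q ⟶ A} {qB : Q ⟶ B} {jA : A ⟶ Q} {jB : B ⟶ Q}
    (hP : IsColimit (BinaryCofan.mk iA iB)) (hQ : IsLimit (BinaryFan.mk qA qB))
    (hAA : iA ≫ pA = jA ≫ qA) (hAB : iA ≫ pB = jA ≫ qB)
    (hBA : iB ≫ pA = jB ≫ qA) (hBB : iB ≫ pB = jB ≫ qB) (f : P ⟶ Q) :
    (f ≫ qA = pA ∧ f ≫ qB = pB) ↔ (iA ≫ f = jA ∧ iB ≫ f = jB) := by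
  constructor
  · rintro ⟨rfl, rfl⟩
    exact ⟨BinaryFan.IsLimit.hom_ext hQ (by simpa using hAA) (by simpa using hAB),
      BinaryFan.IsLimit.hom_ext hQ (by simpa using hBA) (by simpa using hBB)⟩
  · rintro ⟨rfl, rfl⟩
    exact
      ⟨BinaryCofan.IsColimit.hom_ext hP (hAA.trans (Category.assoc _ _ _)).symm
          (hBA.trans (Category.assoc _ _ _)).symm,
        BinaryCofan.IsColimit.hom_ext hP (hAB.trans (Category.assoc _ _ _)).symm
          (hBB.trans (Category.assoc _ _ _)).symm⟩

namespace IsEFBiproduct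

variable {pA : P ⟶ A} {pB : P ⟶ B} {iA : A ⟶ P} {iB : B ⟶ P}
  {qA : Q ⟶ A} {qB : Q ⟶ B} {jA : A ⟶ Q} {jB : B ⟶ Q}

theorem swap (h : IsEFBiproduct P pA pB iA iB) : IsEFBiproduct P pB pA iB iA where
  isProduct X f g := by simpa only [and_comm] using h.isProduct X g f
  isCoproduct X f g := by simpa only [and_comm] using h.isCoproduct X g f
  pA_iA := h.pB_iB
  pB_iB := h.pA_iA
  idem_comm := h.idem_comm.symm

/-- The projections of a biproduct as a limit cone, giving access to the library on limits; the
lifts are chosen from the existence statement `isProduct`. -/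
noncomputable def isLimit (h : IsEFBiproduct P pA pB iA iB) : IsLimit (BinaryFan.mk pA pB) :=
  BinaryFan.IsLimit.mk _ (fun f g => (h.isProduct _ f g).choose)
    (fun f g => (h.isProduct _ f g).choose_spec.1.1)
    (fun f g => (h.isProduct _ f g).choose_spec.1.2)
    (fun f g m hf hg => (h.isProduct _ f g).choose_spec.2 m ⟨hf, hg⟩)

/-- The injections of a biproduct as a colimit cocone, giving access to the library on colimits; the
induced morphisms are chosen from the existence statement `isCoproduct`. -/
noncomputable def isColimit (h : IsEFBiproduct P pA pB iA iB) :
    IsColimit (BinaryCofan.mk iA iB) :=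
  BinaryCofan.IsColimit.mk _ (fun f g => (h.isCoproduct _ f g).choose)
    (fun f g => (h.isCoproduct _ f g).choose_spec.1.1)
    (fun f g => (h.isCoproduct _ f g).choose_spec.1.2)
    (fun f g m hf hg => (h.isCoproduct _ f g).choose_spec.2 m ⟨hf, hg⟩)

theorem pB_iA_eq (h1 : IsEFBiproduct P pA pB iA iB) (h2 : IsEFBiproduct Q qA qB jA jB) :
    iA ≫ pB = jA ≫ qB :=
  have hP : IsConstantMor (iA ≫ pB) := isConstantMor_of_idem_comm h1.isLimit h1.pB_iB h1.idem_comm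
  have hQ : IsCoconstantMor (jA ≫ qB) :=
    isCoconstantMor_of_idem_comm h2.isColimit h2.pA_iA h2.idem_comm
  hP.eq_of_isCoconstantMor_s5 hQ (iB ≫ pA)

theorem comp_proj_iff_inj_comp (h1 : IsEFBiproduct P pA pB iA iB)
    (h2 : IsEFBiproduct Q qA qB jA jB) (f : P ⟶ Q) :
    (f ≫ qA = pA ∧ f ≫ qB = pB) ↔ (iA ≫ f = jA ∧ iB ≫ f = jB) :=
  comp_proj_iff_inj_comp_of_matrix_eq h1.isColimit h2.isLimit
    (h1.pA_iA.trans h2.pA_iA.symm) (h1.pB_iA_eq h2)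
    (h1.swap.pB_iA_eq h2.swap) (h1.pB_iB.trans h2.pB_iB.symm) f

theorem exists_iso_comp_proj (h1 : IsEFBiproduct P pA pB iA iB)
    (h2 : IsEFBiproduct Q qA qB jA jB) : ∃ e : P ≅ Q, e.hom ≫ qA = pA ∧ e.hom ≫ qB = pB :=
  ⟨h1.isLimit.conePointUniqueUpToIso h2.isLimit,
    h1.isLimit.conePointUniqueUpToIso_hom_comp h2.isLimit ⟨WalkingPair.left⟩,
    h1.isLimit.conePointUniqueUpToIso_hom_comp h2.isLimit ⟨WalkingPair.right⟩⟩

end IsEFBiproduct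

end

/-- Two biproducts (in the enrichment-free sense) of `A` and `B` are related
by a unique isomorphism compatible with the biproduct structures; in particular the unique
morphism compatible with the product structures coincides with the unique morphism
compatible with the coproduct structures. -/
theorem stmt5 {C : Type u} [Category.{v} C] {A B P Q : C}
    {pA : P ⟶ A} {pB : P ⟶ B} {iA : A ⟶ P} {iB : B ⟶ P}
    {qA : Q ⟶ A} {qB : Q ⟶ B} {jA : A ⟶ Q} {jB : B ⟶ Q}
    (h1 : IsEFBiproduct P pA pB iA iB) (h2 : IsEFBiproduct Q qA qB jA jB) :
    (∃! f : P ⟶ Q, IsIso f ∧ f ≫ qA = pA ∧ f ≫ qB = pB ∧ iA ≫ f = jA ∧ iB ≫ f = jB) ∧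
    (∀ g h : P ⟶ Q, (g ≫ qA = pA ∧ g ≫ qB = pB) → (iA ≫ h = jA ∧ iB ≫ h = jB) → g = h) := by
  have eq_of_proj {g f : P ⟶ Q} (hg : g ≫ qA = pA ∧ g ≫ qB = pB)
      (hf : f ≫ qA = pA ∧ f ≫ qB = pB) : g = f :=
    (h2.isProduct P pA pB).unique hg hf
  obtain ⟨e, he⟩ := h1.exists_iso_comp_proj h2
  have he' : iA ≫ e.hom = jA ∧ iB ≫ e.hom = jB := (h1.comp_proj_iff_inj_comp h2 e.hom).1 he
  refine ⟨⟨e.hom, ⟨inferInstance, he.1, he.2, he'⟩, ?_⟩, ?_⟩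
  · rintro f ⟨-, hfA, hfB, -⟩
    exact eq_of_proj ⟨hfA, hfB⟩ he
  · intro g h hg hh
    exact eq_of_proj hg ((h1.comp_proj_iff_inj_comp h2 h).2 hh)
end

section
/- Let C be a category such that the diagonal functor Δ : C → C × C admits a functor ⊕ : C × C → C that is simultaneously left adjoint and right adjoint to Δ (an ambiadjoint), and such that for all objects A, B the unit (i_A, i_B) : (A, B) → (A ⊕ B, A ⊕ B) of the adjunction ⊕ ⊣ Δ is a section of the counit (p_A, p_B) : (A ⊕ B, A ⊕ B) → (A, B) of the adjunction Δ ⊣ ⊕, i.e. p_A ∘ i_A = id_A and p_B ∘ i_B = id_B. Then every pair of objects A, B of C has a biproduct in the enrichment-free sense, given by (A ⊕ B, p_A, p_B, i_A, i_B). -/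
open CategoryTheory

universe v u

/-!
The cross terms `i_A ≫ p_B : A ⟶ B` are natural in both `A` and `B`. Naturality against an identity
in one variable makes them absorbing under composition on either side, so they are zero morphisms
for `C`. The opposite cross terms `i_B ≫ p_A` are natural as well, and any such family must agree
with the zero morphisms. Each composite of the two idempotents `p_A ≫ i_A` and `p_B ≫ i_B` contains
a cross term in the middle, so both composites are zero.
-/

section ZeroMorphisms

open Limits

variable {C : Type u} [Category.{v} C]

/-- The zero morphisms of `C` determined by a family of morphisms `A ⟶ B` natural in `A` and `B`,
encoded as a natural transformation between the two projections of `C × C`. -/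
abbrev zeroMorphismsOfFstToSnd (α : CategoryTheory.Prod.fst C C ⟶ CategoryTheory.Prod.snd C C) :
    HasZeroMorphisms C where
  zero A B := ⟨α.app (A, B)⟩
  comp_zero {A A'} f B :=
    (α.naturality (X := (A, B)) (Y := (A', B)) (Prod.mkHom f (𝟙 B))).trans (Category.comp_id _)
  zero_comp A {B B'} g :=
    (α.naturality (X := (A, B)) (Y := (A, B')) (Prod.mkHom (𝟙 A) g)).symm.trans
      (Category.id_comp _)

theorem sndToFst_app_eq_zero [HasZeroMorphisms C]
    (β : CategoryTheory.Prod.snd C C ⟶ CategoryTheory.Prod.fst C C) (X : C × C) :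
    β.app X = 0 := by
  have absorb_zero : 𝟙 X.2 ≫ β.app X = β.app X ≫ (0 : X.1 ⟶ X.1) :=
    β.naturality (X := X) (Y := X) (Prod.mkHom 0 (𝟙 X.2))
  rwa [Category.id_comp, comp_zero] at absorb_zero

theorem comp_comm_of_cross_comp_eq_zero [HasZeroMorphisms C] {A B P : C}
    {pA : P ⟶ A} {pB : P ⟶ B} {iA : A ⟶ P} {iB : B ⟶ P}
    (hAB : iA ≫ pB = 0) (hBA : iB ≫ pA = 0) :
    (pB ≫ iB) ≫ (pA ≫ iA) = (pA ≫ iA) ≫ (pB ≫ iB) := by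
  calc
    (pB ≫ iB) ≫ (pA ≫ iA) = pB ≫ (iB ≫ pA) ≫ iA := by simp only [Category.assoc]
    _ = pA ≫ (iA ≫ pB) ≫ iB := by simp only [hAB, hBA, zero_comp, comp_zero]
    _ = (pA ≫ iA) ≫ (pB ≫ iB) := by simp only [Category.assoc]

end ZeroMorphisms

section DiagonalAdjunctions

variable {C : Type u} [Category.{v} C] {F : C × C ⥤ C}

theorem existsUnique_comp_diag_counit (adj : Functor.diag C ⊣ F) {A B : C} (X : C)
    (f : X ⟶ A) (g : X ⟶ B) :
    ∃! h : X ⟶ F.obj (A, B),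
      h ≫ (adj.counit.app (A, B)).1 = f ∧ h ≫ (adj.counit.app (A, B)).2 = g := by
  have unique_transpose := (adj.homEquiv X (A, B)).symm.bijective.existsUnique (Prod.mkHom f g)
  simp only [Adjunction.homEquiv_counit, Prod.hom_ext_iff] at unique_transpose
  exact unique_transpose

theorem existsUnique_diag_unit_comp (adj : F ⊣ Functor.diag C) {A B : C} (X : C)
    (f : A ⟶ X) (g : B ⟶ X) :
    ∃! h : F.obj (A, B) ⟶ X,
      (adj.unit.app (A, B)).1 ≫ h = f ∧ (adj.unit.app (A, B)).2 ≫ h = g := by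
  have unique_transpose := (adj.homEquiv (A, B) X).bijective.existsUnique (Prod.mkHom f g)
  simp only [Adjunction.homEquiv_unit, Prod.hom_ext_iff] at unique_transpose
  exact unique_transpose

/-- The first coproduct inclusion `A ⟶ F (A, B)`, as a natural transformation, for a left adjoint
`F` of the diagonal. -/
def diagUnitFst (adj : F ⊣ Functor.diag C) : CategoryTheory.Prod.fst C C ⟶ F where
  app X := (adj.unit.app X).1
  naturality _ _ f := congrArg (·.1) (adj.unit.naturality f)

/-- The second coproduct inclusion `B ⟶ F (A, B)`, as a natural transformation, for a left adjoint
`F` of the diagonal. -/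
def diagUnitSnd (adj : F ⊣ Functor.diag C) : CategoryTheory.Prod.snd C C ⟶ F where
  app X := (adj.unit.app X).2
  naturality _ _ f := congrArg (·.2) (adj.unit.naturality f)

/-- The first product projection `F (A, B) ⟶ A`, as a natural transformation, for a right adjoint
`F` of the diagonal. -/
def diagCounitFst (adj : Functor.diag C ⊣ F) : F ⟶ CategoryTheory.Prod.fst C C where
  app X := (adj.counit.app X).1
  naturality _ _ f := congrArg (·.1) (adj.counit.naturality f)

/-- The second product projection `F (A, B) ⟶ B`, as a natural transformation, for a right adjoint
`F` of the diagonal. -/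
def diagCounitSnd (adj : Functor.diag C ⊣ F) : F ⟶ CategoryTheory.Prod.snd C C where
  app X := (adj.counit.app X).2
  naturality _ _ f := congrArg (·.2) (adj.counit.naturality f)

theorem counit_comp_unit_comm_of_ambiadjoint (adj₁ : F ⊣ Functor.diag C)
    (adj₂ : Functor.diag C ⊣ F) (X : C × C) :
    ((diagCounitSnd adj₂).app X ≫ (diagUnitSnd adj₁).app X) ≫
        ((diagCounitFst adj₂).app X ≫ (diagUnitFst adj₁).app X) =
      ((diagCounitFst adj₂).app X ≫ (diagUnitFst adj₁).app X) ≫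
        ((diagCounitSnd adj₂).app X ≫ (diagUnitSnd adj₁).app X) := by
  let := zeroMorphismsOfFstToSnd (diagUnitFst adj₁ ≫ diagCounitSnd adj₂)
  have hAB : (diagUnitFst adj₁).app X ≫ (diagCounitSnd adj₂).app X = 0 := rfl
  have hBA : (diagUnitSnd adj₁).app X ≫ (diagCounitFst adj₂).app X = 0 :=
    sndToFst_app_eq_zero (diagUnitSnd adj₁ ≫ diagCounitFst adj₂) X
  exact comp_comm_of_cross_comp_eq_zero hAB hBA

end DiagonalAdjunctions

/-- If the diagonal `Δ : C ⥤ C × C` has an ambiadjoint `F = ⊕` such that the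
unit of `⊕ ⊣ Δ` is a (componentwise) section of the counit of `Δ ⊣ ⊕`, then every pair of
objects has a biproduct in the enrichment-free sense, given by this data. -/
theorem stmt6 {C : Type u} [Category.{v} C] (F : C × C ⥤ C)
    (adj1 : F ⊣ Functor.diag C) (adj2 : Functor.diag C ⊣ F)
    (hsec : ∀ A B : C,
      (adj1.unit.app (A, B)).1 ≫ (adj2.counit.app (A, B)).1 = 𝟙 A ∧
      (adj1.unit.app (A, B)).2 ≫ (adj2.counit.app (A, B)).2 = 𝟙 B) :
    ∀ A B : C, IsEFBiproduct (F.obj (A, B))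
      (adj2.counit.app (A, B)).1 (adj2.counit.app (A, B)).2
      (adj1.unit.app (A, B)).1 (adj1.unit.app (A, B)).2 := by
  intro A B
  exact
    { isProduct := existsUnique_comp_diag_counit adj2
      isCoproduct := existsUnique_diag_unit_comp adj1
      pA_iA := (hsec A B).1
      pB_iB := (hsec A B).2
      idem_comm := counit_comp_unit_comm_of_ambiadjoint adj1 adj2 (A, B) }
end

section
/- Let C be a category, let (A ⊕ B, p_A, p_B, i_A, i_B) be a biproduct of A and B in the enrichment-free sense, and let (P, q_{AB}, q_C, j_{AB}, j_C) be a biproduct of A ⊕ B and C in the enrichment-free sense. Then P, equipped with the projections p_A ∘ q_{AB}, p_B ∘ q_{AB}, q_C and the injections j_{AB} ∘ i_A, j_{AB} ∘ i_B, j_C, is a ternary biproduct of A, B, C: it is a product of A, B, C via these projections, a coproduct of A, B, C via these injections, each projection composed with the corresponding injection is the identity, and the three idempotents on P given by (injection ∘ projection) pairwise commute. -/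
open CategoryTheory

universe v u

/-!
The delicate point is that the idempotents of `P` through `A` and `B` commute with the one through
`C'`, although only their combination, the idempotent through `AB`, is assumed to. In any biproduct,
commutation of the two canonical idempotents forces the cross terms `iA ≫ pB` and `iB ≫ pA` to be
both constant and coconstant, so they cannot distinguish an endomorphism composed with them from the
identity. Hence `(pA ≫ e ≫ iA) ≫ (pB ≫ e' ≫ iB)` does not depend on `e` and `e'`, and commutation
for all endomorphisms reduces to that of the canonical idempotents.
-/

section UniversalProperties

variable {C : Type u} [Category.{v} C] {A B C' AB P X : C}

theorem existsUnique_lift_three {pA : AB ⟶ A} {pB : AB ⟶ B} {qAB : P ⟶ AB} {qC : P ⟶ C'}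
    {f : X ⟶ A} {g : X ⟶ B} {k : X ⟶ C'}
    (hAB : ∃! l : X ⟶ AB, l ≫ pA = f ∧ l ≫ pB = g)
    (hP : ∀ l : X ⟶ AB, ∃! m : X ⟶ P, m ≫ qAB = l ∧ m ≫ qC = k) :
    ∃! m : X ⟶ P, m ≫ qAB ≫ pA = f ∧ m ≫ qAB ≫ pB = g ∧ m ≫ qC = k := by
  obtain ⟨l, ⟨rfl, rfl⟩, l_unique⟩ := hAB
  obtain ⟨m, ⟨rfl, rfl⟩, m_unique⟩ := hP l
  refine ⟨m, by simp only [Category.assoc, and_self], ?_⟩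
  rintro n ⟨hA, hB, hC⟩
  exact m_unique n ⟨l_unique _ (by simp only [Category.assoc, hA, hB, and_self]), hC⟩

theorem existsUnique_desc_three {iA : A ⟶ AB} {iB : B ⟶ AB} {jAB : AB ⟶ P} {jC : C' ⟶ P}
    {f : A ⟶ X} {g : B ⟶ X} {k : C' ⟶ X}
    (hAB : ∃! d : AB ⟶ X, iA ≫ d = f ∧ iB ≫ d = g)
    (hP : ∀ d : AB ⟶ X, ∃! m : P ⟶ X, jAB ≫ m = d ∧ jC ≫ m = k) :
    ∃! m : P ⟶ X, (iA ≫ jAB) ≫ m = f ∧ (iB ≫ jAB) ≫ m = g ∧ jC ≫ m = k := by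
  obtain ⟨d, ⟨rfl, rfl⟩, d_unique⟩ := hAB
  obtain ⟨m, ⟨rfl, rfl⟩, m_unique⟩ := hP d
  refine ⟨m, by simp only [Category.assoc, and_self], ?_⟩
  rintro n ⟨hA, hB, hC⟩
  exact m_unique n ⟨d_unique _ (by simp only [← Category.assoc, hA, hB, and_self]), hC⟩

end UniversalProperties

theorem conj_comm_of_retraction {C : Type u} [Category.{v} C] {Q P : C} {q : P ⟶ Q} {j : Q ⟶ P}
    (hjq : j ≫ q = 𝟙 Q) {e e' : Q ⟶ Q} (comm : e ≫ e' = e' ≫ e) :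
    (q ≫ e ≫ j) ≫ (q ≫ e' ≫ j) = (q ≫ e' ≫ j) ≫ (q ≫ e ≫ j) := by
  simp only [Category.assoc, reassoc_of% hjq, reassoc_of% comm]

namespace IsEFBiproduct

variable {C : Type u} [Category.{v} C] {A B P : C}
  {pA : P ⟶ A} {pB : P ⟶ B} {iA : A ⟶ P} {iB : B ⟶ P}

theorem symm (h : IsEFBiproduct P pA pB iA iB) : IsEFBiproduct P pB pA iB iA where
  isProduct X g f := by simpa only [and_comm] using h.isProduct X f g
  isCoproduct X g f := by simpa only [and_comm] using h.isCoproduct X f g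
  pA_iA := h.pB_iB
  pB_iB := h.pA_iA
  idem_comm := h.idem_comm.symm

theorem isConstantMor_iA_comp_pB (h : IsEFBiproduct P pA pB iA iB) :
    IsConstantMor (iA ≫ pB) := by
  intro X f f'
  have absorb : pB ≫ iB ≫ pA ≫ iA ≫ pB = pA ≫ iA ≫ pB := by
    simpa only [Category.assoc, h.pB_iB, Category.comp_id] using h.idem_comm =≫ pB
  have factor (a : X ⟶ A) (b : X ⟶ B) : a ≫ iA ≫ pB = b ≫ iB ≫ pA ≫ iA ≫ pB := by
    obtain ⟨m, ⟨rfl, rfl⟩, -⟩ := h.isProduct X a b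
    simp only [Category.assoc, absorb]
  exact (factor f (f ≫ iA ≫ pB)).trans (factor f' (f ≫ iA ≫ pB)).symm

theorem isCoconstantMor_iA_comp_pB (h : IsEFBiproduct P pA pB iA iB) :
    IsCoconstantMor (iA ≫ pB) := by
  intro Y g g'
  have absorb : iA ≫ pB ≫ iB ≫ pA ≫ iA = iA ≫ pB ≫ iB := by
    simpa only [Category.assoc, reassoc_of% h.pA_iA] using iA ≫= h.idem_comm
  have factor (a : A ⟶ Y) (b : B ⟶ Y) : (iA ≫ pB) ≫ b = (iA ≫ pB ≫ iB ≫ pA) ≫ a := by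
    obtain ⟨m, ⟨rfl, rfl⟩, -⟩ := h.isCoproduct Y a b
    simpa only [Category.assoc] using (absorb =≫ m).symm
  exact (factor (iA ≫ pB ≫ g) g).trans (factor (iA ≫ pB ≫ g) g').symm

theorem conj_comp_conj (h : IsEFBiproduct P pA pB iA iB) (e : A ⟶ A) (e' : B ⟶ B) :
    (pA ≫ e ≫ iA) ≫ (pB ≫ e' ≫ iB) = (pA ≫ iA) ≫ (pB ≫ iB) :=
  calc (pA ≫ e ≫ iA) ≫ (pB ≫ e' ≫ iB)
    _ = ((pA ≫ e) ≫ iA ≫ pB) ≫ e' ≫ iB := by simp only [Category.assoc]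
    _ = (pA ≫ iA ≫ pB) ≫ e' ≫ iB := by rw [h.isConstantMor_iA_comp_pB (pA ≫ e) pA]
    _ = pA ≫ (iA ≫ pB) ≫ e' ≫ iB := Category.assoc _ _ _
    _ = pA ≫ (iA ≫ pB) ≫ iB := by rw [h.isCoconstantMor_iA_comp_pB (e' ≫ iB) iB]
    _ = (pA ≫ iA) ≫ (pB ≫ iB) := by simp only [Category.assoc]

theorem conj_comm (h : IsEFBiproduct P pA pB iA iB) (e : A ⟶ A) (e' : B ⟶ B) :
    (pA ≫ e ≫ iA) ≫ (pB ≫ e' ≫ iB) = (pB ≫ e' ≫ iB) ≫ (pA ≫ e ≫ iA) := by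
  rw [h.conj_comp_conj, h.symm.conj_comp_conj, h.idem_comm]

end IsEFBiproduct

/-- If `(AB, pA, pB, iA, iB)` is a biproduct of `A, B` and
`(P, qAB, qC, jAB, jC)` is a biproduct of `AB, C'` (in the enrichment-free sense), then
`P` with projections `pA ∘ qAB, pB ∘ qAB, qC` and injections `jAB ∘ iA, jAB ∘ iB, jC` is a
ternary biproduct of `A, B, C'`: a product and a coproduct via this data, each projection
composed with the corresponding injection is the identity, and the three canonical
idempotents on `P` pairwise commute. -/
theorem stmt10 {C : Type u} [Category.{v} C] {A B C' : C}
    {AB P : C} {pA : AB ⟶ A} {pB : AB ⟶ B} {iA : A ⟶ AB} {iB : B ⟶ AB}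
    {qAB : P ⟶ AB} {qC : P ⟶ C'} {jAB : AB ⟶ P} {jC : C' ⟶ P}
    (h1 : IsEFBiproduct AB pA pB iA iB) (h2 : IsEFBiproduct P qAB qC jAB jC) :
    (∀ (X : C) (f : X ⟶ A) (g : X ⟶ B) (k : X ⟶ C'),
      ∃! m : X ⟶ P, m ≫ (qAB ≫ pA) = f ∧ m ≫ (qAB ≫ pB) = g ∧ m ≫ qC = k) ∧
    (∀ (X : C) (f : A ⟶ X) (g : B ⟶ X) (k : C' ⟶ X),
      ∃! m : P ⟶ X, (iA ≫ jAB) ≫ m = f ∧ (iB ≫ jAB) ≫ m = g ∧ jC ≫ m = k) ∧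
    ((iA ≫ jAB) ≫ (qAB ≫ pA) = 𝟙 A ∧ (iB ≫ jAB) ≫ (qAB ≫ pB) = 𝟙 B ∧ jC ≫ qC = 𝟙 C') ∧
    (((qAB ≫ pA) ≫ (iA ≫ jAB)) ≫ ((qAB ≫ pB) ≫ (iB ≫ jAB)) =
        ((qAB ≫ pB) ≫ (iB ≫ jAB)) ≫ ((qAB ≫ pA) ≫ (iA ≫ jAB)) ∧
      ((qAB ≫ pA) ≫ (iA ≫ jAB)) ≫ (qC ≫ jC) = (qC ≫ jC) ≫ ((qAB ≫ pA) ≫ (iA ≫ jAB)) ∧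
      ((qAB ≫ pB) ≫ (iB ≫ jAB)) ≫ (qC ≫ jC) = (qC ≫ jC) ≫ ((qAB ≫ pB) ≫ (iB ≫ jAB))) := by
  let retractA : Retract A P := .trans ⟨iA, pA, h1.pA_iA⟩ ⟨jAB, qAB, h2.pA_iA⟩
  let retractB : Retract B P := .trans ⟨iB, pB, h1.pB_iB⟩ ⟨jAB, qAB, h2.pA_iA⟩
  refine ⟨fun X f g k ↦ existsUnique_lift_three (h1.isProduct X f g) (h2.isProduct X · k),
    fun X f g k ↦ existsUnique_desc_three (h1.isCoproduct X f g) (h2.isCoproduct X · k),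
    ⟨retractA.retract, retractB.retract, h2.pB_iB⟩, ?commAB, ?commAC, ?commBC⟩
  case commAB =>
    simpa only [Category.assoc] using conj_comm_of_retraction h2.pA_iA h1.idem_comm.symm
  case commAC =>
    simpa only [Category.assoc, Category.id_comp] using h2.conj_comm (pA ≫ iA) (𝟙 C')
  case commBC =>
    simpa only [Category.assoc, Category.id_comp] using h2.conj_comm (pB ≫ iB) (𝟙 C')
end

section
/- Let C be a category with zero morphisms in which every pair of objects has a biproduct in the enrichment-free sense. Then for all objects A, B the zero morphism 0_{A,B} : A → B equals p_B ∘ i_A where (A ⊕ B, p_A, p_B, i_A, i_B) is any biproduct of A and B; in particular p_B ∘ i_A does not depend on the choice of biproduct. -/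
open CategoryTheory

universe v u

theorem IsCoconstantMor.comp_endo {C : Type u} [Category.{v} C] {A B : C} {c : A ⟶ B}
    (hc : IsCoconstantMor c) (e : B ⟶ B) : c ≫ e = c :=
  (hc e (𝟙 B)).trans (Category.comp_id c)

theorem isCoconstantMor_of_zeroFamily {C : Type u} [Category.{v} C] {z : ∀ X Y : C, X ⟶ Y}
    (hz : ∀ (W X Y Z : C) (f : W ⟶ X) (g : Y ⟶ Z), f ≫ z X Y ≫ g = z W Z) (A B : C) :
    IsCoconstantMor (z A B) := by
  have absorb : ∀ {Y : C} (g : B ⟶ Y), z A B ≫ g = z A Y := fun g => by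
    simpa only [Category.id_comp] using hz A A B _ (𝟙 A) g
  exact fun _ f g => (absorb f).trans (absorb g).symm

theorem IsEFBiproduct.pB_iB_pA_iA_pB {C : Type u} [Category.{v} C] {A B P : C}
    {pA : P ⟶ A} {pB : P ⟶ B} {iA : A ⟶ P} {iB : B ⟶ P} (h : IsEFBiproduct P pA pB iA iB) :
    pB ≫ iB ≫ pA ≫ iA ≫ pB = pA ≫ iA ≫ pB :=
  calc
    pB ≫ iB ≫ pA ≫ iA ≫ pB = ((pB ≫ iB) ≫ pA ≫ iA) ≫ pB := by simp only [Category.assoc]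
    _ = ((pA ≫ iA) ≫ pB ≫ iB) ≫ pB := by rw [h.idem_comm]
    _ = pA ≫ iA ≫ pB := by simp only [Category.assoc, h.pB_iB, Category.comp_id]

/-- The pairing `⟨𝟙, c⟩ : A ⟶ P` sees `iA ≫ pB` through its first component; commuting the two
idempotents of `P` moves it to the second component, where `c` absorbs everything after it. -/
theorem stmt16_general {C : Type u} [Category.{v} C] {A B P : C}
    {pA : P ⟶ A} {pB : P ⟶ B} {iA : A ⟶ P} {iB : B ⟶ P} (h : IsEFBiproduct P pA pB iA iB)
    {c : A ⟶ B} (hc : IsCoconstantMor c) : iA ≫ pB = c := by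
  obtain ⟨s, ⟨s_pA, s_pB⟩, -⟩ := h.isProduct A (𝟙 A) c
  calc
    iA ≫ pB = s ≫ pA ≫ iA ≫ pB := by rw [reassoc_of% s_pA]
    _ = s ≫ pB ≫ iB ≫ pA ≫ iA ≫ pB := by rw [h.pB_iB_pA_iA_pB]
    _ = c ≫ iB ≫ pA ≫ iA ≫ pB := by rw [reassoc_of% s_pB]
    _ = c := hc.comp_endo _

/-- In a category with zero morphisms in which every pair of objects has a
biproduct in the enrichment-free sense, for any biproduct `(P, pA, pB, iA, iB)` of `A, B`
one has `pB ∘ iA = 0_{A,B}`; in particular `pB ∘ iA` is independent of the choice of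
biproduct. -/
theorem stmt16 {C : Type u} [Category.{v} C]
    (z : ∀ X Y : C, X ⟶ Y)
    (hz : ∀ (W X Y Z : C) (f : W ⟶ X) (g : Y ⟶ Z), f ≫ z X Y ≫ g = z W Z)
    (hbi : ∀ A B : C, ∃ (P : C) (pA : P ⟶ A) (pB : P ⟶ B) (iA : A ⟶ P) (iB : B ⟶ P),
      IsEFBiproduct P pA pB iA iB)
    {A B P : C} (pA : P ⟶ A) (pB : P ⟶ B) (iA : A ⟶ P) (iB : B ⟶ P)
    (h : IsEFBiproduct P pA pB iA iB) :
    iA ≫ pB = z A B := by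
  exact stmt16_general h (isCoconstantMor_of_zeroFamily hz A B)
end
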